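/- (Data Localisation) Let H_{A1}, H_{A2}, H_B be finite-dimensional complex Hilbert spaces and set H_A = H_{A1} ⊗ H_{A2}. Fix unit vectors φ ∈ H_{A2} and γ ∈ H_B, and let U be a unitary operator on H_A ⊗ H_B. Suppose there exists a density operator ρ_B on H_B such that for every unit vector ψ ∈ H_{A1}, Tr_A[U(|ψ⟩⟨ψ| ⊗ |φ⟩⟨φ| ⊗ |γ⟩⟨γ|)U†] = ρ_B. Then there exist a unitary operator V on H_A = H_{A1} ⊗ H_{A2} and a density operator σ on H_{A2}, both independent of ψ, such that for every unit vector ψ ∈ H_{A1}, Tr_B[U(|ψ⟩⟨ψ| ⊗ |φ⟩⟨φ| ⊗ |γ⟩⟨γ|)U†] = V(|ψ⟩⟨ψ| ⊗ σ)V†. -/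

import Mathlib

open Matrix
open Kronecker
open scoped ComplexOrder

noncomputable section

/-- The rank-one projection `|x⟩⟨x|` onto a (unit) vector `x`. -/
def outer {n : Type*} (x : n → ℂ) : Matrix n n ℂ :=
  Matrix.of fun i j => x i * star (x j)

/-- Partial trace over the first tensor factor of an operator on `H_A ⊗ H_B`. -/
def trFst {A B : Type*} [Fintype A] (M : Matrix (A × B) (A × B) ℂ) : Matrix B B ℂ :=
  Matrix.of fun b b' => ∑ a, M (a, b) (a, b')

/-- Partial trace over the second tensor factor of an operator on `H_A ⊗ H_B`. -/
def trSnd {A B : Type*} [Fintype B] (M : Matrix (A × B) (A × B) ℂ) : Matrix A A ℂ :=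
  Matrix.of fun a a' => ∑ b, M (a, b) (a', b)

/-- A density operator: positive semidefinite with unit trace. -/
def IsDensity {n : Type*} [Fintype n] (M : Matrix n n ℂ) : Prop :=
  M.PosSemidef ∧ M.trace = 1

/-- The product vector `ψ ⊗ φ ⊗ γ` on `H_{A1} ⊗ H_{A2} ⊗ H_B`. -/
def tens3 {A1 A2 B : Type*} (ψ : A1 → ℂ) (φ : A2 → ℂ) (γ : B → ℂ) :
    ((A1 × A2) × B) → ℂ := fun q => ψ q.1.1 * φ q.1.2 * γ q.2

/-!
Let `W` be the map `ψ ↦ U (ψ ⊗ φ ⊗ γ)` from `H_{A1}` to `H_A ⊗ H_B`, with Kraus operators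
`K_b : H_{A1} → H_A` indexed by a basis of `H_B`. That the reduced state on `H_B` does not depend
on `ψ` says, by polarization, that `K_bᴴ K_b' = ρ_{b'b} • 1`; equivalently, the block row `K` of
the `K_b` has Gram matrix `1 ⊗ ρᵀ`. As `K` has `dim H_{A1} * dim H_{A2}` rows, comparing ranks
gives `rank ρ ≤ dim H_{A2}`, so `ρᵀ = Rᴴ R` for some `R : H_B → H_{A2}`. Now `K` and `1 ⊗ R` have
the same Gram matrix, so `K = V (1 ⊗ R)` for a unitary `V`, and the reduced state on `H_A`, which
is `K (|ψ⟩⟨ψ| ⊗ 1) Kᴴ`, becomes `V (|ψ⟩⟨ψ| ⊗ R Rᴴ) Vᴴ`.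
-/

theorem conjTranspose_mul_self_submatrix_one {α m n : Type*} [NonAssocSemiring α] [StarRing α]
    [Fintype m] [DecidableEq m] [DecidableEq n] (e : n ↪ m) :
    ((1 : Matrix m m α).submatrix id e)ᴴ * (1 : Matrix m m α).submatrix id e = 1 := by
  rw [conjTranspose_submatrix, conjTranspose_one, ← submatrix_mul _ _ _ _ _ Function.bijective_id,
    Matrix.one_mul, submatrix_one_embedding]

theorem rank_kronecker {K l m n p : Type*} [Field K] [Finite l] [Fintype m] [Finite n]
    [Fintype p] (A : Matrix l m K) (B : Matrix n p K) : (A ⊗ₖ B).rank = A.rank * B.rank := by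
  classical
  have := Fintype.ofFinite l
  have := Fintype.ofFinite n
  rw [rank_eq_finrank_range_toLin _ ((Pi.basisFun K l).tensorProduct (Pi.basisFun K n))
      ((Pi.basisFun K m).tensorProduct (Pi.basisFun K p)), toLin_kronecker,
    TensorProduct.range_map, ← TensorProduct.range_mapIncl,
    LinearMap.finrank_range_of_inj (Module.Flat.tensorProduct_mapIncl_injective_of_left _ _),
    Module.finrank_tensorProduct, ← rank_eq_finrank_range_toLin, ← rank_eq_finrank_range_toLin]

section RCLike

variable {𝕜 : Type*} [RCLike 𝕜]

theorem exists_linearIsometry_comp_eq_of_norm_eq {E F : Type*} [AddCommGroup E] [Module 𝕜 E]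
    [NormedAddCommGroup F] [InnerProductSpace 𝕜 F] [FiniteDimensional 𝕜 F] {f g : E →ₗ[𝕜] F}
    (h : ∀ x, ‖f x‖ = ‖g x‖) : ∃ L : F →ₗᵢ[𝕜] F, ∀ x, L (g x) = f x := by
  obtain ⟨s, hs⟩ := g.rangeRestrict.exists_rightInverse_of_surjective g.range_rangeRestrict
  have g_section (y : LinearMap.range g) : g (s y) = y :=
    congrArg Subtype.val (LinearMap.congr_fun hs y)
  let L₀ : LinearMap.range g →ₗᵢ[𝕜] F :=
    { toLinearMap := f ∘ₗ s
      norm_map' := fun y => by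
        rw [LinearMap.comp_apply, h, g_section, Submodule.coe_norm] }
  refine ⟨L₀.extend, fun x => ?_⟩
  have f_section : f (s (g.rangeRestrict x)) = f x := by
    rw [← sub_eq_zero, ← map_sub, ← norm_eq_zero, h, map_sub, g_section,
      LinearMap.codRestrict_apply, sub_self, norm_zero]
  exact (L₀.extend_apply (g.rangeRestrict x)).trans f_section

theorem toEuclideanLin_symm_linearIsometry_mem_unitaryGroup {m : Type*} [Fintype m] [DecidableEq m]
    (L : EuclideanSpace 𝕜 m →ₗᵢ[𝕜] EuclideanSpace 𝕜 m) :
    toEuclideanLin.symm L.toLinearMap ∈ unitaryGroup m 𝕜 := by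
  rw [mem_unitaryGroup_iff', star_eq_conjTranspose]
  apply toEuclideanLin.injective
  rw [toLpLin_mul_same, toEuclideanLin_conjTranspose_eq_adjoint, LinearEquiv.apply_symm_apply,
    toLpLin_one]
  refine LinearMap.ext fun x => ext_inner_right 𝕜 fun y => ?_
  rw [LinearMap.comp_apply, LinearMap.adjoint_inner_left]
  exact L.inner_map_map x y

theorem norm_toLp_mulVec_eq_of_conjTranspose_mul_self_eq {m n : Type*} [Fintype m] [Fintype n]
    {X Y : Matrix m n 𝕜} (h : Xᴴ * X = Yᴴ * Y) (x : n → 𝕜) :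
    ‖WithLp.toLp 2 (X *ᵥ x)‖ = ‖WithLp.toLp 2 (Y *ᵥ x)‖ := by
  have inner_eq (Z : Matrix m n 𝕜) :
      inner 𝕜 (WithLp.toLp 2 (Z *ᵥ x)) (WithLp.toLp 2 (Z *ᵥ x)) = star x ⬝ᵥ (Zᴴ * Z) *ᵥ x := by
    rw [EuclideanSpace.inner_toLp_toLp, dotProduct_comm, star_mulVec, ← dotProduct_mulVec,
      mulVec_mulVec]
  rw [@norm_eq_sqrt_re_inner 𝕜, inner_eq, h, ← inner_eq, ← norm_eq_sqrt_re_inner]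

theorem exists_unitary_mul_eq_of_conjTranspose_mul_self_eq {m n : Type*} [Fintype m]
    [DecidableEq m] [Finite n] {X Y : Matrix m n 𝕜} (h : Xᴴ * X = Yᴴ * Y) :
    ∃ V ∈ unitaryGroup m 𝕜, X = V * Y := by
  have := Fintype.ofFinite n
  let e := (WithLp.linearEquiv 2 𝕜 (m → 𝕜)).symm
  obtain ⟨L, hL⟩ := exists_linearIsometry_comp_eq_of_norm_eq
    (f := e.toLinearMap ∘ₗ X.mulVecLin) (g := e.toLinearMap ∘ₗ Y.mulVecLin)
    (norm_toLp_mulVec_eq_of_conjTranspose_mul_self_eq h)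
  refine ⟨_, toEuclideanLin_symm_linearIsometry_mem_unitaryGroup L, ext_iff_mulVec.2 fun x => ?_⟩
  apply WithLp.toLp_injective 2
  calc WithLp.toLp 2 (X *ᵥ x) = L (WithLp.toLp 2 (Y *ᵥ x)) := (hL x).symm
    _ = toEuclideanLin (toEuclideanLin.symm L.toLinearMap) (WithLp.toLp 2 (Y *ᵥ x)) := by
      rw [LinearEquiv.apply_symm_apply, LinearIsometry.coe_toLinearMap]
    _ = WithLp.toLp 2 ((toEuclideanLin.symm L.toLinearMap * Y) *ᵥ x) := by
      rw [toLpLin_apply, mulVec_mulVec]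

theorem isHermitian_apply_eq_sum_eigenvalues {n : Type*} [Fintype n] [DecidableEq n]
    {P : Matrix n n 𝕜} (hP : P.IsHermitian) (x y : n) :
    P x y = ∑ k, (hP.eigenvectorUnitary : Matrix n n 𝕜) x k * hP.eigenvalues k *
      star ((hP.eigenvectorUnitary : Matrix n n 𝕜) y k) := by
  have spectral := congrFun₂ hP.spectral_theorem x y
  rw [Unitary.conjStarAlgAut_apply, mul_apply] at spectral
  simp only [mul_diagonal, star_apply] at spectral
  exact spectral

theorem exists_conjTranspose_mul_self_eq_of_rank_le {κ n : Type*} [Fintype κ] [Fintype n]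
    {P : Matrix n n 𝕜} (hP : P.PosSemidef) (hrank : P.rank ≤ Fintype.card κ) :
    ∃ R : Matrix κ n 𝕜, Rᴴ * R = P := by
  classical
  let lam := hP.isHermitian.eigenvalues
  let S : Matrix {k // lam k ≠ 0} n 𝕜 :=
    of fun k x =>
      (√(lam k) : 𝕜) * star ((hP.isHermitian.eigenvectorUnitary : Matrix n n 𝕜) x k)
  have gram_S : Sᴴ * S = P := by
    ext x y
    rw [isHermitian_apply_eq_sum_eigenvalues hP.isHermitian,
      ← Fintype.sum_subtype_add_sum_subtype (fun k => lam k ≠ 0),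
      Fintype.sum_eq_zero (fun k : {k // ¬lam k ≠ 0} => _) fun k => by
        rw [show hP.isHermitian.eigenvalues k = 0 from not_not.1 k.2, RCLike.ofReal_zero, mul_zero,
          zero_mul], add_zero, mul_apply]
    refine Fintype.sum_congr _ _ fun k => ?_
    have sqrt_mul_sqrt : (√(lam k) : 𝕜) * √(lam k) = lam k := by
      rw [← RCLike.ofReal_mul, Real.mul_self_sqrt (hP.eigenvalues_nonneg k)]
    have star_sqrt : star (√(lam k) : 𝕜) = √(lam k) := RCLike.conj_ofReal _
    rw [← sqrt_mul_sqrt]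
    simp only [S, conjTranspose_apply, of_apply, star_mul', star_star, star_sqrt]
    ring
  rw [hP.isHermitian.rank_eq_card_non_zero_eigs] at hrank
  obtain ⟨e⟩ := Function.Embedding.nonempty_of_card_le hrank
  refine ⟨(1 : Matrix κ κ 𝕜).submatrix id e * S, ?_⟩
  rw [conjTranspose_mul, Matrix.mul_assoc, ← Matrix.mul_assoc _ _ S,
    conjTranspose_mul_self_submatrix_one, Matrix.one_mul, gram_S]

theorem rank_le_card_of_conjTranspose_mul_self_eq_one_kronecker {l n p : Type*} [Fintype l]
    [Fintype n] [Fintype p] [DecidableEq n] [Nonempty n] {X : Matrix (n × l) (n × p) 𝕜}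
    {P : Matrix p p 𝕜} (h : Xᴴ * X = (1 : Matrix n n 𝕜) ⊗ₖ P) : P.rank ≤ Fintype.card l := by
  have rank_le := X.rank_le_card_height
  rw [← rank_conjTranspose_mul_self, h, rank_kronecker, rank_one, Fintype.card_prod] at rank_le
  exact Nat.le_of_mul_le_mul_left rank_le Fintype.card_pos

end RCLike

theorem linearMap_eq_smul_id_of_inner_eq {V : Type*} [NormedAddCommGroup V] [InnerProductSpace ℂ V]
    {T : V →ₗ[ℂ] V} {c : ℂ} (h : ∀ x, ‖x‖ = 1 → inner ℂ x (T x) = c) :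
    T = c • LinearMap.id := by
  rw [← ext_inner_map]
  intro x
  rw [← inner_conj_symm, ← inner_conj_symm ((c • LinearMap.id : V →ₗ[ℂ] V) x)]
  congr 1
  obtain rfl | hx := eq_or_ne x 0
  · simp only [map_zero, inner_zero_left]
  obtain ⟨u, hu, r, rfl⟩ : ∃ u : V, ‖u‖ = 1 ∧ ∃ r : ℂ, x = r • u :=
    ⟨_, norm_smul_inv_norm (𝕜 := ℂ) hx, ‖x‖, (smul_inv_smul₀ (by simpa using hx) x).symm⟩
  simp only [map_smul, LinearMap.smul_apply, LinearMap.id_apply, inner_smul_left, inner_smul_right,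
    h u hu, inner_self_eq_norm_sq_to_K, hu, RCLike.ofReal_one, one_pow, mul_one]
  ring

theorem conjTranspose_mul_eq_smul_one_of_dotProduct_eq {m n : Type*} [Fintype m] [Fintype n]
    [DecidableEq n] {K L : Matrix m n ℂ} {c : ℂ}
    (h : ∀ ψ : EuclideanSpace ℂ n, ‖ψ‖ = 1 → (L *ᵥ ψ) ⬝ᵥ star (K *ᵥ ψ) = c) :
    Kᴴ * L = c • 1 := by
  apply toEuclideanLin.injective
  rw [map_smul, toLpLin_one]
  refine linearMap_eq_smul_id_of_inner_eq fun ψ hψ => ?_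
  rw [← h ψ hψ, toLpLin_apply, EuclideanSpace.inner_eq_star_dotProduct, ← mulVec_mulVec,
    star_mulVec, dotProduct_comm, dotProduct_mulVec, dotProduct_comm]

theorem outer_mulVec {m n : Type*} [Fintype n] (M : Matrix m n ℂ) (x : n → ℂ) :
    outer (M *ᵥ x) = M * outer x * Mᴴ := by
  change vecMulVec _ (star _) = M * vecMulVec _ (star _) * Mᴴ
  rw [mul_vecMulVec, vecMulVec_mul, ← star_mulVec]

theorem IsDensity.transpose {n : Type*} [Fintype n] {ρ : Matrix n n ℂ} (h : IsDensity ρ) :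
    IsDensity ρᵀ :=
  ⟨h.1.transpose, by rw [trace_transpose, h.2]⟩

theorem isDensity_mul_conjTranspose_self_iff {m n : Type*} [Fintype m] [Fintype n]
    {R : Matrix m n ℂ} : IsDensity (R * Rᴴ) ↔ IsDensity (Rᴴ * R) :=
  and_congr
    (iff_of_true (posSemidef_self_mul_conjTranspose R) (posSemidef_conjTranspose_mul_self R))
    (by rw [trace_mul_comm])

theorem exists_isDensity (n : Type*) [Fintype n] [Nonempty n] :
    ∃ σ : Matrix n n ℂ, IsDensity σ := by
  classical
  let j := Classical.arbitrary n
  refine ⟨diagonal (Pi.single j 1), PosSemidef.diagonal (Pi.single_nonneg.2 zero_le_one), ?_⟩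
  rw [trace_diagonal, Fintype.sum_pi_single']

section Kraus

variable {A B n : Type*}

/-- The operator `K_b = (1 ⊗ ⟨b|) W`, for the standard basis vector `|b⟩` of `H_B`; when `W` is an
isometry, these are the Kraus operators of the channel `ρ ↦ Tr_B (W ρ Wᴴ)`. -/
def krausOperator (W : Matrix (A × B) n ℂ) (b : B) : Matrix A n ℂ :=
  W.submatrix (fun a => (a, b)) id

/-- The block row `(K_b)_b` of the Kraus operators of `W`: the reshaping of `W : n → A ⊗ B` in which
the environment index `b` is moved from the output to the input. -/
def krausRow (W : Matrix (A × B) n ℂ) : Matrix A (n × B) ℂ :=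
  of fun a p => krausOperator W p.2 a p.1

theorem trFst_mul_outer_mul_apply [Fintype A] [Fintype n] (W : Matrix (A × B) n ℂ) (ψ : n → ℂ)
    (b b' : B) : trFst (W * outer ψ * Wᴴ) b b' =
      (krausOperator W b *ᵥ ψ) ⬝ᵥ star (krausOperator W b' *ᵥ ψ) := by
  rw [← outer_mulVec]
  rfl

theorem trSnd_mul_outer_mul [Fintype B] [DecidableEq B] [Fintype n] (W : Matrix (A × B) n ℂ)
    (ψ : n → ℂ) :
    trSnd (W * outer ψ * Wᴴ) =
      krausRow W * (outer ψ ⊗ₖ (1 : Matrix B B ℂ)) * (krausRow W)ᴴ := by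
  ext a a'
  have mul_kronecker_one (i : n) (b : B) :
      (krausRow W * (outer ψ ⊗ₖ (1 : Matrix B B ℂ))) a (i, b) =
        (krausOperator W b * outer ψ) a i := by
    simp only [mul_apply, kronecker_apply, Fintype.sum_prod_type, one_apply, mul_ite, mul_one,
      mul_zero, Finset.sum_ite_eq', Finset.mem_univ, if_true]
    rfl
  rw [mul_apply, Fintype.sum_prod_type_right]
  simp only [mul_kronecker_one]
  rfl

theorem conjTranspose_krausRow_mul_krausRow [Fintype A] [Fintype n] [DecidableEq n]
    {W : Matrix (A × B) n ℂ} {ρ : Matrix B B ℂ}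
    (h : ∀ ψ : EuclideanSpace ℂ n, ‖ψ‖ = 1 → trFst (W * outer ψ * Wᴴ) = ρ) :
    (krausRow W)ᴴ * krausRow W = (1 : Matrix n n ℂ) ⊗ₖ ρᵀ := by
  ext ⟨i, b⟩ ⟨i', b'⟩
  have knill_laflamme : (krausOperator W b)ᴴ * krausOperator W b' = ρ b' b • 1 :=
    conjTranspose_mul_eq_smul_one_of_dotProduct_eq fun ψ hψ => by
      rw [← h ψ hψ, trFst_mul_outer_mul_apply]
  rw [kronecker_apply, transpose_apply, mul_comm]
  exact congrFun₂ knill_laflamme i i'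

end Kraus

/-- The linear map `ψ ↦ U (ψ ⊗ φ ⊗ γ)`, which adjoins the ancillas `φ` and `γ` to a state of
`H_{A1}` and then applies `U`, as a matrix. -/
def encoder {m A1 A2 B : Type*} [Fintype A1] [Fintype A2] [Fintype B] [DecidableEq A1]
    (U : Matrix m ((A1 × A2) × B) ℂ) (φ : A2 → ℂ) (γ : B → ℂ) : Matrix m A1 ℂ :=
  U * (of fun q i => tens3 (Pi.single i 1) φ γ q : Matrix ((A1 × A2) × B) A1 ℂ)

theorem encoder_mulVec {m A1 A2 B : Type*} [Fintype A1] [Fintype A2] [Fintype B] [DecidableEq A1]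
    (U : Matrix m ((A1 × A2) × B) ℂ) (φ : A2 → ℂ) (γ : B → ℂ) (ψ : A1 → ℂ) :
    encoder U φ γ *ᵥ ψ = U *ᵥ tens3 ψ φ γ := by
  rw [encoder, ← mulVec_mulVec]
  congr 1
  ext q
  simp only [mulVec, dotProduct, tens3, of_apply, Pi.single_apply, ite_mul, one_mul, zero_mul,
    Finset.sum_ite_eq, Finset.mem_univ, if_true]
  ring

theorem mul_outer_tens3_mul {m A1 A2 B : Type*} [Fintype A1] [Fintype A2] [Fintype B]
    [DecidableEq A1] (U : Matrix m ((A1 × A2) × B) ℂ) (φ : A2 → ℂ) (γ : B → ℂ) (ψ : A1 → ℂ) :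
    U * outer (tens3 ψ φ γ) * Uᴴ = encoder U φ γ * outer ψ * (encoder U φ γ)ᴴ := by
  rw [← outer_mulVec, ← outer_mulVec, encoder_mulVec]

theorem stmt4_general {A1 A2 B : Type*} [Fintype A1] [Fintype A2] [Fintype B] [DecidableEq A1]
    [DecidableEq A2] [Nonempty A2] (W : Matrix ((A1 × A2) × B) A1 ℂ) (ρB : Matrix B B ℂ)
    (hρB : IsDensity ρB)
    (hsec : ∀ ψ : EuclideanSpace ℂ A1, ‖ψ‖ = 1 → trFst (W * outer ψ * Wᴴ) = ρB) :
    ∃ V ∈ unitaryGroup (A1 × A2) ℂ, ∃ σ : Matrix A2 A2 ℂ, IsDensity σ ∧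
      ∀ ψ : A1 → ℂ, trSnd (W * outer ψ * Wᴴ) = V * (outer ψ ⊗ₖ σ) * Vᴴ := by
  classical
  cases isEmpty_or_nonempty A1
  · obtain ⟨σ, hσ⟩ := exists_isDensity A2
    exact ⟨1, one_mem _, σ, hσ, fun _ => Subsingleton.elim _ _⟩
  have gram := conjTranspose_krausRow_mul_krausRow hsec
  obtain ⟨R, hR⟩ := exists_conjTranspose_mul_self_eq_of_rank_le (κ := A2) hρB.transpose.1
    (rank_le_card_of_conjTranspose_mul_self_eq_one_kronecker gram)
  obtain ⟨V, hV, krausRow_eq⟩ : ∃ V ∈ unitaryGroup (A1 × A2) ℂ,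
      krausRow W = V * ((1 : Matrix A1 A1 ℂ) ⊗ₖ R) :=
    exists_unitary_mul_eq_of_conjTranspose_mul_self_eq <| by
      rw [gram, conjTranspose_kronecker, ← mul_kronecker_mul, conjTranspose_one, one_mul, hR]
  refine ⟨V, hV, R * Rᴴ, isDensity_mul_conjTranspose_self_iff.2 (hR ▸ hρB.transpose), fun ψ => ?_⟩
  calc trSnd (W * outer ψ * Wᴴ)
      = krausRow W * (outer ψ ⊗ₖ (1 : Matrix B B ℂ)) * (krausRow W)ᴴ := trSnd_mul_outer_mul W ψ
    _ = V * (((1 : Matrix A1 A1 ℂ) ⊗ₖ R) * (outer ψ ⊗ₖ (1 : Matrix B B ℂ)) *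
          ((1 : Matrix A1 A1 ℂ) ⊗ₖ R)ᴴ) * Vᴴ := by
      simp only [krausRow_eq, conjTranspose_mul, Matrix.mul_assoc]
    _ = V * (outer ψ ⊗ₖ (R * Rᴴ)) * Vᴴ := by
      rw [conjTranspose_kronecker, ← mul_kronecker_mul, ← mul_kronecker_mul, conjTranspose_one,
        one_mul, mul_one, Matrix.mul_one]

/-- Data Localisation: let `H_A = H_{A1} ⊗ H_{A2}`, fix unit vectors
`φ ∈ H_{A2}`, `γ ∈ H_B` and a unitary `U` on `H_A ⊗ H_B`.  If the reduced state
`Tr_A[U(|ψ⟩⟨ψ| ⊗ |φ⟩⟨φ| ⊗ |γ⟩⟨γ|)U†]` on `H_B` is a fixed density operator `ρ_B`,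
independent of the unit vector `ψ ∈ H_{A1}`, then there are a unitary `V` on `H_A` and a
density operator `σ` on `H_{A2}`, both independent of `ψ`, with
`Tr_B[U(|ψ⟩⟨ψ| ⊗ |φ⟩⟨φ| ⊗ |γ⟩⟨γ|)U†] = V(|ψ⟩⟨ψ| ⊗ σ)V†` for every unit `ψ`. -/
theorem stmt4 {A1 A2 B : Type*} [Fintype A1] [Fintype A2] [Fintype B]
    [DecidableEq A1] [DecidableEq A2] [DecidableEq B]
    (φ : EuclideanSpace ℂ A2) (hφ : ‖φ‖ = 1)
    (γ : EuclideanSpace ℂ B) (hγ : ‖γ‖ = 1)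
    (U : Matrix ((A1 × A2) × B) ((A1 × A2) × B) ℂ)
    (hU : U ∈ Matrix.unitaryGroup ((A1 × A2) × B) ℂ)
    (ρB : Matrix B B ℂ) (hρB : IsDensity ρB)
    (hsec : ∀ ψ : EuclideanSpace ℂ A1, ‖ψ‖ = 1 →
      trFst (U * outer (tens3 ψ φ γ) * Uᴴ) = ρB) :
    ∃ V : Matrix (A1 × A2) (A1 × A2) ℂ, V ∈ Matrix.unitaryGroup (A1 × A2) ℂ ∧
      ∃ σ : Matrix A2 A2 ℂ, IsDensity σ ∧
        ∀ ψ : EuclideanSpace ℂ A1, ‖ψ‖ = 1 →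
          trSnd (U * outer (tens3 ψ φ γ) * Uᴴ) = V * (outer ψ ⊗ₖ σ) * Vᴴ := by
  simp only [mul_outer_tens3_mul] at hsec ⊢
  have : Nonempty A2 := not_isEmpty_iff.1 fun _ => by
    rw [Subsingleton.elim φ 0, norm_zero] at hφ
    exact zero_ne_one hφ
  obtain ⟨V, hV, σ, hσ, hloc⟩ := stmt4_general _ ρB hρB hsec
  exact ⟨V, hV, σ, hσ, fun ψ _ => hloc ψ⟩

end
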